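/- arXiv:2010.04521 — 2 statements merged into one kernel-verified Lean document; each statement's English description precedes it below -/
import Mathlib

section
/- Let n ≥ 2, let Q be an n×n Laplacian matrix, let ζ = diag(Q†), r = (1/2)·Q·ζ + u/n, R² = (1/2)·ζᵀ·(r + u/n), and let Ω be the matrix with entries Ω i j = ζ_i + ζ_j − 2(Q†) i j. Then Ω·r = (rᵀ·Ω·r)·u and rᵀ·Ω·r = 2R². -/
open Matrix

/-- A Laplacian matrix: symmetric, nonpositive off-diagonal entries, zero row sums,
and irreducible. -/
def IsLaplacian {m : Type*} [Fintype m] [DecidableEq m] (Q : Matrix m m ℝ) : Prop :=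
  Q.IsSymm ∧ (∀ i j, i ≠ j → Q i j ≤ 0) ∧ (Q *ᵥ (fun _ => (1 : ℝ)) = 0) ∧
  ∀ V : Finset m, V.Nonempty → V ≠ Finset.univ → ∃ i ∈ V, ∃ j ∉ V, Q i j ≠ 0

/-- `B` is the Moore–Penrose pseudoinverse of `A`. -/
def IsMoorePenrose {k l : Type*} [Fintype k] [Fintype l]
    (A : Matrix k l ℝ) (B : Matrix l k ℝ) : Prop :=
  A * B * A = A ∧ B * A * B = B ∧ (A * B)ᵀ = A * B ∧ (B * A)ᵀ = B * A

/-!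
Write `u` for the all-ones vector. By the maximum principle the kernel of `Q` is spanned by `u`, so
`Q† Q` is the orthogonal projection `x ↦ x - (uᵀ x / n) u`, and `Q† u = 0` because `uᵀ Q = 0`.
Hence `2 Q† r = Q† Q ζ = ζ - (uᵀ ζ / n) u`. Since `Ω = ζ uᵀ + u ζᵀ - 2 Q†` and `uᵀ r = 1`, the two
occurrences of `ζ` in `Ω r` cancel, leaving `Ω r = (ζᵀ r + uᵀ ζ / n) u = 2 R² u`.
-/

section MaximumPrinciple

variable {m R : Type*} [Fintype m] [CommRing R] [LinearOrder R] [IsStrictOrderedRing R]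
  {Q : Matrix m m R}

theorem eq_of_mulVec_nonpos_of_forall_le {i j : m} {x : m → R}
    (hoff : ∀ k, i ≠ k → Q i k ≤ 0) (hrow : (Q *ᵥ 1) i = 0)
    (hx : (Q *ᵥ x) i ≤ 0) (hmax : ∀ k, x k ≤ x i) (hij : Q i j ≠ 0) : x j = x i := by
  have hterm_nonneg : ∀ k ∈ Finset.univ, 0 ≤ Q i k * (x k - x i) := by
    intro k _
    obtain rfl | hik := eq_or_ne i k
    · simp
    · exact mul_nonneg_of_nonpos_of_nonpos (hoff k hik) (sub_nonpos.2 (hmax k))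
  have hsum : ∑ k, Q i k * (x k - x i) = (Q *ᵥ x) i - (Q *ᵥ 1) i * x i := by
    simp [mulVec, dotProduct, mul_sub, Finset.sum_mul]
  have hsum_nonpos : ∑ k, Q i k * (x k - x i) ≤ 0 := by
    rwa [hsum, hrow, zero_mul, sub_zero]
  have hsum_zero := hsum_nonpos.antisymm (Finset.sum_nonneg hterm_nonneg)
  have hterm := (Finset.sum_eq_zero_iff_of_nonneg hterm_nonneg).1 hsum_zero j (Finset.mem_univ j)
  exact sub_eq_zero.1 ((mul_eq_zero.1 hterm).resolve_left hij)

theorem ker_mulVecLin_eq_span_one [Nonempty m]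
    (hoff : ∀ i j, i ≠ j → Q i j ≤ 0) (hrow : Q *ᵥ 1 = 0)
    (hirr : ∀ V : Finset m, V.Nonempty → V ≠ Finset.univ → ∃ i ∈ V, ∃ j ∉ V, Q i j ≠ 0) :
    LinearMap.ker Q.mulVecLin = R ∙ (1 : m → R) := by
  refine le_antisymm (fun x hx ↦ ?_) ?_
  · replace hx : Q *ᵥ x = 0 := hx
    obtain ⟨i₀, hmax⟩ := Finite.exists_max x
    have hlevel : Finset.univ.filter (x · = x i₀) = Finset.univ := by
      by_contra hne
      obtain ⟨i, hi, j, hj, hij⟩ := hirr _ ⟨i₀, by simp⟩ hne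
      simp only [Finset.mem_filter_univ] at hi hj
      refine hj ((eq_of_mulVec_nonpos_of_forall_le (hoff i) (congrFun hrow i)
        (congrFun hx i).le (fun k ↦ ?_) hij).trans hi)
      exact hi ▸ hmax k
    refine Submodule.mem_span_singleton.2 ⟨x i₀, funext fun i ↦ ?_⟩
    simpa using (Finset.filter_eq_self.1 hlevel i (Finset.mem_univ i)).symm
  · exact (Submodule.span_singleton_le_iff_mem _ _).2 hrow

end MaximumPrinciple

namespace IsLaplacian

variable {m : Type*} [Fintype m] [DecidableEq m] {Q : Matrix m m ℝ}

theorem one_vecMul (hQ : IsLaplacian Q) : 1 ᵥ* Q = 0 := by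
  rw [← hQ.1.eq, vecMul_transpose]
  exact hQ.2.2.1

theorem ker_mulVecLin [Nonempty m] (hQ : IsLaplacian Q) :
    LinearMap.ker Q.mulVecLin = ℝ ∙ (1 : m → ℝ) :=
  ker_mulVecLin_eq_span_one hQ.2.1 hQ.2.2.1 hQ.2.2.2

end IsLaplacian

namespace IsMoorePenrose

variable {k l : Type*} [Fintype k] [Fintype l] {A : Matrix k l ℝ} {B : Matrix l k ℝ}

theorem mulVec_eq_zero (h : IsMoorePenrose A B) {v : k → ℝ} (hv : v ᵥ* A = 0) : B *ᵥ v = 0 := by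
  obtain ⟨-, hBAB, hAB, -⟩ := h
  calc B *ᵥ v = B *ᵥ ((A * B)ᵀ *ᵥ v) := by rw [hAB, mulVec_mulVec, ← Matrix.mul_assoc, hBAB]
    _ = 0 := by rw [mulVec_transpose, ← vecMul_vecMul, hv, zero_vecMul, mulVec_zero]

theorem vecMul_eq_zero (h : IsMoorePenrose A B) {v : l → ℝ} (hv : A *ᵥ v = 0) : v ᵥ* B = 0 := by
  obtain ⟨-, hBAB, -, hBA⟩ := h
  calc v ᵥ* B = v ᵥ* (B * A)ᵀ ᵥ* B := by rw [hBA, vecMul_vecMul, hBAB]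
    _ = 0 := by rw [vecMul_transpose, ← mulVec_mulVec, hv, mulVec_zero, zero_vecMul]

theorem mulVec_mulVec_of_ker_eq_span (h : IsMoorePenrose A B) {v : l → ℝ}
    (hker : LinearMap.ker A.mulVecLin = ℝ ∙ v) (x : l → ℝ) :
    B *ᵥ (A *ᵥ x) = x - (v ⬝ᵥ x / v ⬝ᵥ v) • v := by
  have hv : A *ᵥ v = 0 := by
    simpa using hker.ge (Submodule.mem_span_singleton_self v)
  have hres : x - B *ᵥ (A *ᵥ x) ∈ LinearMap.ker A.mulVecLin := by
    simp [mulVec_sub, mulVec_mulVec, ← Matrix.mul_assoc, h.1]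
  obtain ⟨c, hc⟩ := Submodule.mem_span_singleton.1 (hker ▸ hres)
  have hcv : c * (v ⬝ᵥ v) = v ⬝ᵥ x := by
    rw [← smul_eq_mul, ← dotProduct_smul, hc, dotProduct_sub, dotProduct_mulVec,
      h.vecMul_eq_zero hv, zero_dotProduct, sub_zero]
  obtain rfl | hv0 := eq_or_ne v 0
  · rw [smul_zero] at hc
    rw [smul_zero, hc, sub_sub_cancel]
  · rw [← hcv, mul_div_cancel_right₀ c (dotProduct_self_eq_zero.not.2 hv0), hc, sub_sub_cancel]

end IsMoorePenrose

/-- The effective resistance matrix `Ω` determined by a pseudoinverse `B` of a Laplacian. -/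
def resistanceMatrix {m R : Type*} [CommRing R] (B : Matrix m m R) : Matrix m m R :=
  of fun i j ↦ B i i + B j j - 2 * B i j

theorem resistanceMatrix_mulVec {m R : Type*} [Fintype m] [CommRing R] (B : Matrix m m R)
    (x : m → R) :
    resistanceMatrix B *ᵥ x =
      (1 ⬝ᵥ x) • B.diag + (B.diag ⬝ᵥ x) • 1 - (2 : R) • (B *ᵥ x) := by
  ext i
  simp only [resistanceMatrix, mulVec, dotProduct, of_apply, diag_apply, Pi.add_apply,
    Pi.sub_apply, Pi.smul_apply, Pi.one_apply, smul_eq_mul, one_mul, mul_one, sub_mul, add_mul,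
    Finset.sum_add_distrib, Finset.sum_sub_distrib, ← Finset.mul_sum, mul_assoc]
  ring

section Curvature

variable {m K : Type*} [Fintype m] [Field K]

/-- The resistance curvature `r`, the solution of `Ω r = 2 R² u` with entries summing to one, for
a Laplacian `Q` with pseudoinverse `B`. -/
def resistanceCurvature (Q B : Matrix m m K) : m → K :=
  (1 / 2 : K) • (Q *ᵥ B.diag) + (Fintype.card m : K)⁻¹ • 1

/-- The squared resistance radius `R²` of a Laplacian `Q` with pseudoinverse `B`. -/
def resistanceRadiusSq (Q B : Matrix m m K) : K :=
  (1 / 2 : K) * (B.diag ⬝ᵥ (resistanceCurvature Q B + (Fintype.card m : K)⁻¹ • 1))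

theorem one_dotProduct_resistanceCurvature [CharZero K] [Nonempty m] {Q : Matrix m m K}
    (hcol : 1 ᵥ* Q = 0) (B : Matrix m m K) :
    1 ⬝ᵥ resistanceCurvature Q B = 1 := by
  simp [resistanceCurvature, dotProduct_add, dotProduct_smul, dotProduct_mulVec, hcol]

theorem two_mul_resistanceRadiusSq [NeZero (2 : K)] (Q B : Matrix m m K) :
    2 * resistanceRadiusSq Q B =
      B.diag ⬝ᵥ resistanceCurvature Q B + 1 ⬝ᵥ B.diag / Fintype.card m := by
  rw [resistanceRadiusSq, ← mul_assoc, mul_one_div_cancel two_ne_zero, one_mul, dotProduct_add,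
    dotProduct_smul, dotProduct_comm _ 1, smul_eq_mul, inv_mul_eq_div]

end Curvature

section Pseudoinverse

variable {m : Type*} [Fintype m] {Q Qd : Matrix m m ℝ}

theorem two_smul_mulVec_resistanceCurvature (hQd : IsMoorePenrose Q Qd)
    (hker : LinearMap.ker Q.mulVecLin = ℝ ∙ (1 : m → ℝ)) (hcol : 1 ᵥ* Q = 0) :
    (2 : ℝ) • (Qd *ᵥ resistanceCurvature Q Qd) =
      Qd.diag - (1 ⬝ᵥ Qd.diag / Fintype.card m) • 1 := by
  have hone : Qd *ᵥ 1 = 0 := hQd.mulVec_eq_zero hcol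
  calc (2 : ℝ) • (Qd *ᵥ resistanceCurvature Q Qd) = Qd *ᵥ (Q *ᵥ Qd.diag) := by
        rw [resistanceCurvature, mulVec_add, mulVec_smul, mulVec_smul, hone, smul_zero, add_zero,
          smul_smul, mul_one_div_cancel two_ne_zero, one_smul]
    _ = Qd.diag - (1 ⬝ᵥ Qd.diag / Fintype.card m) • 1 := by
        rw [hQd.mulVec_mulVec_of_ker_eq_span hker, one_dotProduct_one]

theorem resistanceMatrix_mulVec_resistanceCurvature [Nonempty m] (hQd : IsMoorePenrose Q Qd)
    (hker : LinearMap.ker Q.mulVecLin = ℝ ∙ (1 : m → ℝ)) (hcol : 1 ᵥ* Q = 0) :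
    resistanceMatrix Qd *ᵥ resistanceCurvature Q Qd = (2 * resistanceRadiusSq Q Qd) • 1 := by
  rw [resistanceMatrix_mulVec, one_dotProduct_resistanceCurvature hcol,
    two_smul_mulVec_resistanceCurvature hQd hker hcol, two_mul_resistanceRadiusSq]
  module

theorem stmt_9_general [Nonempty m] (hQd : IsMoorePenrose Q Qd)
    (hker : LinearMap.ker Q.mulVecLin = ℝ ∙ (1 : m → ℝ)) (hcol : 1 ᵥ* Q = 0) :
    resistanceMatrix Qd *ᵥ resistanceCurvature Q Qd =
      (resistanceCurvature Q Qd ⬝ᵥ (resistanceMatrix Qd *ᵥ resistanceCurvature Q Qd)) • 1 ∧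
    resistanceCurvature Q Qd ⬝ᵥ (resistanceMatrix Qd *ᵥ resistanceCurvature Q Qd) =
      2 * resistanceRadiusSq Q Qd := by
  have hΩr := resistanceMatrix_mulVec_resistanceCurvature hQd hker hcol
  have hrΩr : resistanceCurvature Q Qd ⬝ᵥ (resistanceMatrix Qd *ᵥ resistanceCurvature Q Qd) =
      2 * resistanceRadiusSq Q Qd := by
    rw [hΩr, dotProduct_smul, dotProduct_comm, one_dotProduct_resistanceCurvature hcol,
      smul_eq_mul, mul_one]
  exact ⟨hrΩr.symm ▸ hΩr, hrΩr⟩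

end Pseudoinverse

theorem stmt_9 {n : ℕ} (hn : 2 ≤ n) (Q : Matrix (Fin n) (Fin n) ℝ)
    (hQ : IsLaplacian Q)
    (Qd : Matrix (Fin n) (Fin n) ℝ) (hQd : IsMoorePenrose Q Qd)
    (ζ : Fin n → ℝ) (hζ : ∀ i, ζ i = Qd i i)
    (r : Fin n → ℝ)
    (hr : r = (1 / 2 : ℝ) • (Q *ᵥ ζ) + (n : ℝ)⁻¹ • (fun _ => (1 : ℝ)))
    (R2 : ℝ)
    (hR2 : R2 = (1 / 2 : ℝ) * (ζ ⬝ᵥ (r + (n : ℝ)⁻¹ • (fun _ => (1 : ℝ)))))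
    (Ω : Matrix (Fin n) (Fin n) ℝ)
    (hΩ : ∀ i j, Ω i j = ζ i + ζ j - 2 * Qd i j) :
    Ω *ᵥ r = (r ⬝ᵥ (Ω *ᵥ r)) • (fun _ => (1 : ℝ)) ∧
    r ⬝ᵥ (Ω *ᵥ r) = 2 * R2 := by
  have : NeZero n := ⟨by lia⟩
  obtain rfl : ζ = Qd.diag := funext hζ
  obtain rfl : Ω = resistanceMatrix Qd := Matrix.ext hΩ
  obtain rfl : r = resistanceCurvature Q Qd := by
    rw [hr, resistanceCurvature, Fintype.card_fin]; rfl
  obtain rfl : R2 = resistanceRadiusSq Q Qd := by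
    rw [hR2, resistanceRadiusSq, Fintype.card_fin]; rfl
  exact stmt_9_general hQd hQ.ker_mulVecLin hQ.one_vecMul
end

section
/- Let n ≥ 2, let Q be an n×n Laplacian matrix, let V be a nonempty proper subset of the index set with |V| = v ≥ 2, and let C = I − u·uᵀ/v be the v×v centering matrix. Then all off-diagonal entries of the Moore–Penrose pseudoinverse of C·(Q†)_{VV}·C are ≤ 0; that is, every face of a hyperacute Simplex is again a hyperacute Simplex. -/
open Matrix

/-- The centering matrix `I − u·uᵀ/v` on the index set `V`. -/
noncomputable def centering {m : Type*} [Fintype m] [DecidableEq m] (V : Finset m) :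
    Matrix ↥V ↥V ℝ :=
  1 - (V.card : ℝ)⁻¹ • Matrix.of (fun _ _ => (1 : ℝ))

/-!
Fix a vertex `j` of the face on `V` and let `b` be the column of the pseudoinverse indexed by `j`.
It has zero sum, so `Q†` turns its extension by zero into a potential `f`: a solution of
`Q *ᵥ f = b` on `V` and `Q *ᵥ f = 0` off `V`, determined up to an additive constant. For one choice
of the constant, `f` restricts to the indicator of `j` on `V`. Thus `f` is the harmonic extension
of that indicator, hence nonnegative by the minimum principle. At a vertex `i ≠ j` of the face it
therefore attains its minimum `0`, and there `b i = (Q *ᵥ f) i ≤ 0` by the sign pattern of `Q`.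
-/

namespace IsMoorePenrose

variable {k l : Type*} [Fintype k] [Fintype l] {A : Matrix k l ℝ} {B : Matrix l k ℝ}

protected theorem transpose (h : IsMoorePenrose A B) : IsMoorePenrose Aᵀ Bᵀ := by
  obtain ⟨hABA, hBAB, hAB, hBA⟩ := h
  refine ⟨?_, ?_, ?_, ?_⟩
  · rw [← transpose_mul, ← transpose_mul, ← Matrix.mul_assoc, hABA]
  · rw [← transpose_mul, ← transpose_mul, ← Matrix.mul_assoc, hBAB]
  · rw [← transpose_mul, hBA, hBA]
  · rw [← transpose_mul, hAB, hAB]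

theorem transpose_mulVec_sub_mulVec_mulVec_eq_zero (h : IsMoorePenrose A B) (y : k → ℝ) :
    Aᵀ *ᵥ (y - A *ᵥ (B *ᵥ y)) = 0 := by
  have normal_eq : Aᵀ * (A * B) = Aᵀ := by
    rw [← h.2.2.1, ← transpose_mul, h.1]
  rw [mulVec_sub, mulVec_mulVec, mulVec_mulVec, Matrix.mul_assoc, normal_eq, sub_self]

theorem vecMul_eq_zero_of_mulVec_eq_zero (h : IsMoorePenrose A B) {x : l → ℝ}
    (hx : A *ᵥ x = 0) : x ᵥ* B = 0 := by
  have hBA : x ᵥ* (B * A) = 0 := by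
    rw [← h.2.2.2, vecMul_transpose, ← mulVec_mulVec, hx, mulVec_zero]
  rw [← h.2.1, ← vecMul_vecMul, hBA, zero_vecMul]

end IsMoorePenrose

namespace IsLaplacian

variable {m : Type*} [Fintype m] [DecidableEq m] {Q : Matrix m m ℝ}

theorem mulVec_sub_const (hQ : IsLaplacian Q) (x : m → ℝ) (c : ℝ) :
    Q *ᵥ (x - fun _ => c) = Q *ᵥ x := by
  have hconst : (fun _ : m => c) = c • fun _ => (1 : ℝ) := by ext; simp
  rw [mulVec_sub, hconst, mulVec_smul, hQ.2.2.1, smul_zero, sub_zero]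

theorem sum_mulVec (hQ : IsLaplacian Q) (x : m → ℝ) : ∑ i, (Q *ᵥ x) i = 0 := by
  rw [← one_dotProduct, dotProduct_mulVec, ← mulVec_transpose, hQ.1]
  exact (congrArg (· ⬝ᵥ x) hQ.2.2.1).trans (zero_dotProduct x)

theorem mul_nonpos_of_apply_eq_zero (hQ : IsLaplacian Q) {x : m → ℝ} (hx : 0 ≤ x) {i : m}
    (hi : x i = 0) (j : m) : Q i j * x j ≤ 0 := by
  rcases eq_or_ne i j with rfl | hij
  · simp [hi]
  · exact mul_nonpos_of_nonpos_of_nonneg (hQ.2.1 i j hij) (hx j)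

theorem mulVec_apply_nonpos (hQ : IsLaplacian Q) {x : m → ℝ} (hx : 0 ≤ x) {i : m}
    (hi : x i = 0) : (Q *ᵥ x) i ≤ 0 :=
  Finset.sum_nonpos fun j _ => hQ.mul_nonpos_of_apply_eq_zero hx hi j

theorem apply_eq_zero_of_mulVec_nonneg (hQ : IsLaplacian Q) {x : m → ℝ} (hx : 0 ≤ x) {i j : m}
    (hi : x i = 0) (hQi : 0 ≤ (Q *ᵥ x) i) (hij : Q i j ≠ 0) : x j = 0 := by
  have hterm : ∀ k ∈ Finset.univ, Q i k * x k ≤ 0 :=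
    fun k _ => hQ.mul_nonpos_of_apply_eq_zero hx hi k
  have hsum : ∑ k, Q i k * x k = 0 := (hQ.mulVec_apply_nonpos hx hi).antisymm hQi
  have hj := (Finset.sum_eq_zero_iff_of_nonpos hterm).1 hsum j (Finset.mem_univ j)
  exact (mul_eq_zero.1 hj).resolve_left hij

theorem minimum_principle (hQ : IsLaplacian Q) {S : Set m} (hS : S.Nonempty) {x : m → ℝ}
    (hxS : ∀ i ∈ S, 0 ≤ x i) (hQx : ∀ i ∉ S, 0 ≤ (Q *ᵥ x) i) : 0 ≤ x := by
  obtain ⟨s, hs⟩ := hS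
  obtain ⟨a, -, ha⟩ := Finset.univ.exists_min_image x ⟨s, Finset.mem_univ s⟩
  have hmin : ∀ i, x a ≤ x i := fun i => ha i (Finset.mem_univ i)
  suffices 0 ≤ x a from fun i => this.trans (hmin i)
  by_contra! hneg
  have hne : ({i | x i = x a} : Finset m) ≠ Finset.univ := fun h =>
    (hneg.trans_le (hxS s hs)).ne' (Finset.filter_eq_self.1 h s (Finset.mem_univ s))
  obtain ⟨i, hi, j, hj, hij⟩ := hQ.2.2.2 _ ⟨a, by simp⟩ hne
  simp only [Finset.mem_filter_univ] at hi hj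
  have hiS : i ∉ S := fun h => (hxS i h).not_gt (hi ▸ hneg)
  have hzero : (x - fun _ => x a : m → ℝ) j = 0 :=
    hQ.apply_eq_zero_of_mulVec_nonneg (fun k => sub_nonneg.2 (hmin k)) (sub_eq_zero.2 hi)
      (hQ.mulVec_sub_const x (x a) ▸ hQx i hiS) hij
  exact hj (sub_eq_zero.1 hzero)

theorem eq_zero_of_eqOn_zero (hQ : IsLaplacian Q) {S : Set m} (hS : S.Nonempty) {x : m → ℝ}
    (hxS : ∀ i ∈ S, x i = 0) (hQx : ∀ i ∉ S, (Q *ᵥ x) i = 0) : x = 0 := by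
  refine le_antisymm (neg_nonneg.1 ?_) ?_
  · exact hQ.minimum_principle hS (by simp +contextual [hxS])
      (by simp +contextual [mulVec_neg, hQx])
  · exact hQ.minimum_principle hS (fun i hi => (hxS i hi).ge) fun i hi => (hQx i hi).ge

theorem apply_eq_apply_of_mulVec_eq_zero (hQ : IsLaplacian Q) {x : m → ℝ} (hx : Q *ᵥ x = 0)
    (i j : m) : x i = x j := by
  have hzero : x - (fun _ => x j) = 0 :=
    hQ.eq_zero_of_eqOn_zero (Set.singleton_nonempty j) (by simp)
      fun k _ => by rw [hQ.mulVec_sub_const, hx, Pi.zero_apply]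
  exact sub_eq_zero.1 (congrFun hzero i)

theorem mulVec_mulVec_of_sum_eq_zero (hQ : IsLaplacian Q) {Qd : Matrix m m ℝ}
    (hQd : IsMoorePenrose Q Qd) {y : m → ℝ} (hy : ∑ i, y i = 0) : Q *ᵥ (Qd *ᵥ y) = y := by
  set r := y - Q *ᵥ (Qd *ᵥ y) with hr
  have hker : Q *ᵥ r = 0 := by
    simpa only [hQ.1.eq] using hQd.transpose_mulVec_sub_mulVec_mulVec_eq_zero y
  have hsum : ∑ i, r i = 0 := by
    simp only [hr, Pi.sub_apply, Finset.sum_sub_distrib, hy, hQ.sum_mulVec, sub_self]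
  have hzero : r = 0 := by
    ext i
    have : Nonempty m := ⟨i⟩
    simpa [fun k => hQ.apply_eq_apply_of_mulVec_eq_zero hker k i] using hsum
  exact (sub_eq_zero.1 hzero).symm

end IsLaplacian

section Extend

variable {k l m R : Type*} [Fintype k] [Fintype m] [NonUnitalNonAssocSemiring R] {e : k → m}

theorem dotProduct_extend_zero (he : Function.Injective e) (x : m → R) (y : k → R) :
    x ⬝ᵥ Function.extend e y 0 = (x ∘ e) ⬝ᵥ y := by
  refine (Fintype.sum_of_injective e he _ _ (fun i hi => ?_) fun i => ?_).symm
  · rw [Function.extend_apply' _ _ _ hi, Pi.zero_apply, mul_zero]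
  · rw [he.extend_apply, Function.comp_apply]

theorem submatrix_mulVec_eq_mulVec_extend (he : Function.Injective e) (A : Matrix m m R)
    (f : l → m) (y : k → R) (i : l) :
    (A.submatrix f e *ᵥ y) i = (A *ᵥ Function.extend e y 0) (f i) :=
  (dotProduct_extend_zero he (A (f i)) y).symm

end Extend

namespace IsLaplacian

variable {m : Type*} [Fintype m] [DecidableEq m] {Q Qd : Matrix m m ℝ} {V : Finset m}

theorem exists_mulVec_eq_extend (hQ : IsLaplacian Q) (hQd : IsMoorePenrose Q Qd) {y g : V → ℝ}
    (hy : ∑ i, y i = 0) {c : ℝ}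
    (hg : Qd.submatrix Subtype.val Subtype.val *ᵥ y = g + fun _ => c) :
    ∃ f : m → ℝ, Q *ᵥ f = Function.extend Subtype.val y 0 ∧ ∀ i : V, f i = g i := by
  refine ⟨Qd *ᵥ Function.extend Subtype.val y 0 - fun _ => c, ?_, fun i => ?_⟩
  · rw [hQ.mulVec_sub_const]
    apply hQ.mulVec_mulVec_of_sum_eq_zero hQd
    rw [← one_dotProduct, dotProduct_extend_zero Subtype.val_injective, Pi.one_comp,
      one_dotProduct, hy]
  · rw [Pi.sub_apply, ← submatrix_mulVec_eq_mulVec_extend Subtype.val_injective, hg]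
    exact add_sub_cancel_right _ _

theorem eq_zero_of_submatrix_mulVec_eq_const (hQ : IsLaplacian Q) (hQd : IsMoorePenrose Q Qd)
    {y : V → ℝ} (hy : ∑ i, y i = 0) {c : ℝ}
    (hc : Qd.submatrix (Subtype.val : V → m) Subtype.val *ᵥ y = fun _ => c) : y = 0 := by
  obtain ⟨f, hQf, hfV⟩ := hQ.exists_mulVec_eq_extend hQd hy (g := 0) (by rw [hc, zero_add])
  ext i
  have hf : f = 0 := by
    refine hQ.eq_zero_of_eqOn_zero (S := V) ⟨i, i.2⟩ (fun a ha => hfV ⟨a, ha⟩) fun a ha => ?_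
    rw [hQf, Function.extend_apply' _ _ _ (by simpa using ha), Pi.zero_apply]
  have hyi := congrFun hQf i
  rwa [hf, mulVec_zero, Subtype.val_injective.extend_apply, eq_comm] at hyi

end IsLaplacian

section Centering

variable {m : Type*} [Fintype m] [DecidableEq m] {V : Finset m}

theorem centering_transpose : (centering V)ᵀ = centering V := by
  ext i j
  simp [centering, one_apply, eq_comm]

theorem centering_mulVec (x : V → ℝ) :
    centering V *ᵥ x = x - fun _ => (V.card : ℝ)⁻¹ * ∑ i, x i := by
  rw [centering, sub_mulVec, one_mulVec, smul_mulVec]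
  congr 1
  ext i
  simp [mulVec, dotProduct]

theorem centering_mulVec_of_sum_eq_zero {x : V → ℝ} (hx : ∑ i, x i = 0) :
    centering V *ᵥ x = x := by
  rw [centering_mulVec, hx, mul_zero]
  exact sub_zero x

theorem centering_mulVec_one : centering V *ᵥ 1 = 0 := by
  ext i
  have hV : (V.card : ℝ) ≠ 0 := Nat.cast_ne_zero.2 (Finset.card_ne_zero_of_mem i.2)
  simp [centering_mulVec, hV]

theorem sum_centering_mulVec (x : V → ℝ) : ∑ i, (centering V *ᵥ x) i = 0 := by
  rw [← one_dotProduct, dotProduct_mulVec, ← mulVec_transpose, centering_transpose,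
    centering_mulVec_one, zero_dotProduct]

theorem exists_eq_const_of_centering_mulVec_eq_zero {x : V → ℝ} (hx : centering V *ᵥ x = 0) :
    ∃ c, x = fun _ => c :=
  ⟨_, sub_eq_zero.1 ((centering_mulVec x).symm.trans hx)⟩

end Centering

section FaceGram

variable {m : Type*} [Fintype m] [DecidableEq m] {Q Qd : Matrix m m ℝ} {V : Finset m}

/-- The canonical Gram matrix `C·G_{VV}·C` of the face on the vertices in `V` of a simplex with
Gram matrix `G`, that is, the Gram matrix of these vertices after moving their centroid to `0`. -/
noncomputable def faceGram (G : Matrix m m ℝ) (V : Finset m) : Matrix V V ℝ :=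
  centering V * G.submatrix Subtype.val Subtype.val * centering V

theorem faceGram_transpose (G : Matrix m m ℝ) : (faceGram G V)ᵀ = faceGram Gᵀ V := by
  simp only [faceGram, transpose_mul, centering_transpose, transpose_submatrix, Matrix.mul_assoc]

theorem faceGram_mulVec (G : Matrix m m ℝ) (x : V → ℝ) :
    faceGram G V *ᵥ x =
      centering V *ᵥ (G.submatrix Subtype.val Subtype.val *ᵥ (centering V *ᵥ x)) := by
  simp only [faceGram, mulVec_mulVec, Matrix.mul_assoc]

theorem IsLaplacian.exists_eq_const_of_faceGram_mulVec_eq_zero (hQ : IsLaplacian Q)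
    (hQd : IsMoorePenrose Q Qd) {x : V → ℝ} (hx : faceGram Qd V *ᵥ x = 0) :
    ∃ c, x = fun _ => c := by
  rw [faceGram_mulVec] at hx
  obtain ⟨c, hc⟩ := exists_eq_const_of_centering_mulVec_eq_zero hx
  exact exists_eq_const_of_centering_mulVec_eq_zero
    (hQ.eq_zero_of_submatrix_mulVec_eq_const hQd (sum_centering_mulVec x) hc)

theorem IsMoorePenrose.sum_col_eq_zero_of_faceGram {G : Matrix m m ℝ} {B : Matrix V V ℝ}
    (hB : IsMoorePenrose (faceGram G V) B) (j : V) : ∑ i, B.col j i = 0 := by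
  have hone : faceGram G V *ᵥ 1 = 0 := by
    rw [faceGram_mulVec, centering_mulVec_one, mulVec_zero, mulVec_zero]
  rw [← one_dotProduct]
  exact congrFun (hB.vecMul_eq_zero_of_mulVec_eq_zero hone) j

theorem IsLaplacian.exists_submatrix_mulVec_col_eq_single_add_const (hQ : IsLaplacian Q)
    (hQd : IsMoorePenrose Q Qd) {B : Matrix V V ℝ} (hB : IsMoorePenrose (faceGram Qd V) B)
    (j : V) :
    ∃ c : ℝ, Qd.submatrix Subtype.val Subtype.val *ᵥ B.col j = Pi.single j 1 + fun _ => c := by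
  set Gb := Qd.submatrix Subtype.val Subtype.val *ᵥ B.col j
  have hMb : faceGram Qd V *ᵥ B.col j = centering V *ᵥ Gb := by
    rw [faceGram_mulVec, centering_mulVec_of_sum_eq_zero (hB.sum_col_eq_zero_of_faceGram j)]
  -- The residual of `Pi.single j 1` lies in the kernel of `(faceGram Qd V)ᵀ = faceGram Qdᵀ V`.
  have hQdT : IsMoorePenrose Q Qdᵀ := by simpa only [hQ.1.eq] using hQd.transpose
  obtain ⟨c, hc⟩ := hQ.exists_eq_const_of_faceGram_mulVec_eq_zero hQdT
    (faceGram_transpose Qd ▸ hB.transpose_mulVec_sub_mulVec_mulVec_eq_zero (Pi.single j 1))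
  rw [mulVec_single_one, hMb, centering_mulVec] at hc
  refine ⟨(V.card : ℝ)⁻¹ * ∑ i, Gb i - c, funext fun i => ?_⟩
  have hci := congrFun hc i
  simp only [Pi.sub_apply, Pi.add_apply] at hci ⊢
  linarith

end FaceGram

theorem stmt_15_general {m : Type*} [Fintype m] [DecidableEq m] {Q Qd : Matrix m m ℝ}
    (hQ : IsLaplacian Q) (hQd : IsMoorePenrose Q Qd) {V : Finset m} {B : Matrix V V ℝ}
    (hB : IsMoorePenrose (faceGram Qd V) B) {i j : V} (hij : i ≠ j) : B i j ≤ 0 := by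
  obtain ⟨c, hc⟩ := hQ.exists_submatrix_mulVec_col_eq_single_add_const hQd hB j
  obtain ⟨f, hQf, hfV⟩ := hQ.exists_mulVec_eq_extend hQd (hB.sum_col_eq_zero_of_faceGram j) hc
  have hsingle : 0 ≤ (Pi.single j 1 : V → ℝ) := Pi.single_nonneg.2 zero_le_one
  have hf : 0 ≤ f := by
    refine hQ.minimum_principle (S := V) ⟨j, j.2⟩ (fun a ha => ?_) fun a ha => ?_
    · exact (hsingle ⟨a, ha⟩).trans_eq (hfV ⟨a, ha⟩).symm
    · rw [hQf, Function.extend_apply' _ _ _ (by simpa using ha), Pi.zero_apply]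
  have hfi : f i = 0 := (hfV i).trans (Pi.single_eq_of_ne hij 1)
  calc B i j = (Q *ᵥ f) i := by rw [hQf, Subtype.val_injective.extend_apply, col_apply]
    _ ≤ 0 := hQ.mulVec_apply_nonpos hf hfi

/-- Every face of a hyperacute Simplex is again hyperacute: the pseudoinverse of the
canonical Gram matrix `C·(Q†)_{VV}·C` of a face has nonpositive off-diagonal entries. -/
theorem stmt_15 {n : ℕ} (hn : 2 ≤ n) (Q : Matrix (Fin n) (Fin n) ℝ)
    (hQ : IsLaplacian Q)
    (Qd : Matrix (Fin n) (Fin n) ℝ) (hQd : IsMoorePenrose Q Qd)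
    (V : Finset (Fin n)) (hVu : V ≠ Finset.univ) (hcard : 2 ≤ V.card)
    (B : Matrix ↥V ↥V ℝ)
    (hB : IsMoorePenrose
      (centering V *
        Qd.submatrix (Subtype.val : ↥V → Fin n) (Subtype.val : ↥V → Fin n) *
        centering V) B) :
    ∀ i j : ↥V, i ≠ j → B i j ≤ 0 :=
  fun _ _ hij => stmt_15_general hQ hQd hB hij
end
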